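/- Fix a real number q with 0 < q < 1 and a complex number t with |t| < 1. Then the q-Mehta–Macdonald identity of type A₁ holds: (1/2π) ∫₀^{2π} θ(e^{iφ}) · μ(e^{iφ}; q, t) dφ = ∏_{j=1}^∞ (1 − t qʲ)/(1 − t² qʲ). (Formula (3.3) of the paper in the rank-one case, combined with the A₁ constant term formula.) -/

import Mathlib

open scoped BigOperators
open Filter

noncomputable section

/-- Symmetric monomial `M_r(X) = X^r + X^{-r}` for `r ≥ 1`, `M_0 = 1`. -/
def Msym (r : ℕ) (X : ℂ) : ℂ := if r = 0 then 1 else X ^ r + X⁻¹ ^ r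

/-- Continuous q-Hermite Laurent polynomial (Macdonald polynomial of type A₁ at t = 0). -/
def PbarA1 (q : ℝ) (n : ℕ) (X : ℂ) : ℂ :=
  Msym n X + ∑ j ∈ Finset.Icc 1 (n / 2),
    (∏ i ∈ Finset.range j, (1 - (q : ℂ) ^ (n - i)) / (1 - (q : ℂ) ^ (i + 1))) *
      Msym (n - 2 * j) X

/-- Global q-Whittaker function of type A₁. -/
def whitA1 (q : ℝ) (X Λ : ℂ) : ℂ :=
  ∑' n : ℕ, ((q ^ ((n : ℝ) ^ 2 / 4) : ℝ) : ℂ) * X ^ n * PbarA1 q n Λ /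
    ∏ j ∈ Finset.Icc 1 n, (1 - (q : ℂ) ^ j)

/-- Theta function `θ(Λ) = ∑_{j ∈ ℤ} q^{j²/4} Λ^j`. -/
def thetaA1 (q : ℝ) (Λ : ℂ) : ℂ :=
  ∑' j : ℤ, ((q ^ ((j : ℝ) ^ 2 / 4) : ℝ) : ℂ) * Λ ^ j

/-- Rogers Laurent polynomial (symmetric Macdonald polynomial of type A₁). -/
def RogersA1 (q : ℝ) (t : ℂ) (n : ℕ) (X : ℂ) : ℂ :=
  Msym n X + ∑ j ∈ Finset.Icc 1 (n / 2),
    (∏ i ∈ Finset.range j,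
      ((1 - (q : ℂ) ^ (n - i)) * (1 - t * (q : ℂ) ^ i)) /
      ((1 - (q : ℂ) ^ (1 + i)) * (1 - t * (q : ℂ) ^ (n - i - 1)))) *
    Msym (n - 2 * j) X

/-- Global q,t-spherical function of type A₁, with `t = s²`. -/
def sphA1 (q s : ℝ) (X Λ : ℂ) : ℂ :=
  ∑' n : ℕ, (s : ℂ) ^ n * ((q ^ ((n : ℝ) ^ 2 / 4) : ℝ) : ℂ) *
    RogersA1 q ((s : ℂ) ^ 2) n X * RogersA1 q ((s : ℂ) ^ 2) n Λ *
    ∏ i ∈ Finset.range n,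
      ((1 - (s : ℂ) ^ 2 * (q : ℂ) ^ i) * (1 - (s : ℂ) ^ 2 * (q : ℂ) ^ (i + 1))) /
      ((1 - ((s : ℂ) ^ 2) ^ 2 * (q : ℂ) ^ i) * (1 - (q : ℂ) ^ (i + 1)))

/-- Macdonald truncated theta weight function of type A₁. -/
def muA1 (q : ℝ) (t : ℂ) (X : ℂ) : ℂ :=
  ∏' j : ℕ, ((1 - X ^ 2 * (q : ℂ) ^ j) * (1 - X⁻¹ ^ 2 * (q : ℂ) ^ (j + 1))) /
    ((1 - t * X ^ 2 * (q : ℂ) ^ j) * (1 - t * X⁻¹ ^ 2 * (q : ℂ) ^ (j + 1)))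


/-!
Write `[f]` for the constant term of `X ↦ f (X²)` against the theta function `θ`, put `z = X²`, and
let `W(a, b; z)` be the weight whose two denominator factors carry separate parameters `a`, `b`.
Since `θ` is even under `X ↦ X⁻¹`, the relation `W(tq, tq; z) = W(tq, t; z) + tq W(tq, t; z⁻¹)`
gives `[W(tq, tq)] = (1 + tq) [W(tq, t)]`. Next, `W(tq, t; z)` is
`(1 - t²q) W(t, t; z) + tq W(tq, t; z / q)`, and the last term has mean zero: quasi-periodicity of
`θ` and a contour shift turn it into the average of a function that is odd under `X ↦ X⁻¹`. Hence
`[W(tq, tq)] = (1 + tq)(1 - t²q) [W(t, t)]`. The product side satisfies the same relation, so the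
quotient of the two sides is invariant under `t ↦ tq` and continuous at `0`, therefore constant on
the unit disc. At `t = q` the half-step weight `W(q, 1; z)` is just `1 - z`, and the quotient
is `1`.
-/

section QPochhammer

lemma norm_mul_lt_one {a b : ℂ} (ha : ‖a‖ < 1) (hb : ‖b‖ ≤ 1) : ‖a * b‖ < 1 := by
  rw [norm_mul]
  exact mul_lt_one_of_nonneg_of_lt_one_left (norm_nonneg a) ha hb

lemma ne_one_of_norm_lt_one {a : ℂ} (ha : ‖a‖ < 1) : a ≠ 1 :=
  fun h => ha.ne (by rw [h, norm_one])

/-- The infinite `q`-Pochhammer symbol `(a; q)_∞ = ∏_{j ≥ 0} (1 - a q^j)`. -/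
def qPochhammerInf (a q : ℂ) : ℂ := ∏' j : ℕ, (1 - a * q ^ j)

variable {q : ℂ}

lemma summable_norm_neg_mul_pow (hq : ‖q‖ < 1) (a : ℂ) :
    Summable fun j : ℕ => ‖-(a * q ^ j)‖ := by
  simpa only [norm_neg, norm_mul, norm_pow] using
    (summable_geometric_of_lt_one (norm_nonneg q) hq).mul_left ‖a‖

lemma multipliable_qPochhammerInf (hq : ‖q‖ < 1) (a : ℂ) :
    Multipliable fun j : ℕ => 1 - a * q ^ j := by
  simpa only [sub_eq_add_neg] using
    multipliable_one_add_of_summable (summable_norm_neg_mul_pow hq a)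

lemma qPochhammerInf_zero_left (q : ℂ) : qPochhammerInf 0 q = 1 := by
  simp [qPochhammerInf]

lemma qPochhammerInf_eq_one_sub_mul (hq : ‖q‖ < 1) (a : ℂ) :
    qPochhammerInf a q = (1 - a) * qPochhammerInf (a * q) q := by
  have hshift (j : ℕ) : 1 - a * q * q ^ j = 1 - a * q ^ (j + 1) := by ring
  have htail := (multipliable_qPochhammerInf hq (a * q)).congr hshift
  rw [qPochhammerInf, qPochhammerInf, tprod_congr hshift,
    tprod_eq_zero_mul' (f := fun j => 1 - a * q ^ j) htail, pow_zero, mul_one]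

lemma differentiable_qPochhammerInf (hq : ‖q‖ < 1) :
    Differentiable ℂ fun a => qPochhammerInf a q := by
  intro a
  have hbound : ∀ j : ℕ, ∀ b ∈ Metric.ball (0 : ℂ) (‖a‖ + 1),
      ‖-(b * q ^ j)‖ ≤ (‖a‖ + 1) * ‖q‖ ^ j := by
    intro j b hb
    rw [norm_neg, norm_mul, norm_pow]
    gcongr
    exact (mem_ball_zero_iff.mp hb).le
  have hprod := (((summable_geometric_of_lt_one (norm_nonneg q) hq).mul_left
    (‖a‖ + 1)).hasProdLocallyUniformlyOn_nat_one_add Metric.isOpen_ball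
    (.of_forall hbound) fun j => by fun_prop).tendstoLocallyUniformlyOn_finsetRange
  have hdiff : DifferentiableOn ℂ (fun b => ∏' j : ℕ, (1 + -(b * q ^ j)))
      (Metric.ball 0 (‖a‖ + 1)) :=
    hprod.differentiableOn (.of_forall fun n => by fun_prop) Metric.isOpen_ball
  simpa only [qPochhammerInf, sub_eq_add_neg] using
    hdiff.differentiableAt (Metric.isOpen_ball.mem_nhds (by simp))

lemma continuous_qPochhammerInf (hq : ‖q‖ < 1) : Continuous fun a => qPochhammerInf a q :=
  (differentiable_qPochhammerInf hq).continuous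

lemma qPochhammerInf_ne_zero (hq : ‖q‖ < 1) {a : ℂ} (ha : ‖a‖ < 1) :
    qPochhammerInf a q ≠ 0 := by
  have hfactor (j : ℕ) : 1 + -(a * q ^ j) ≠ 0 := by
    have hlt : ‖a * q ^ j‖ < 1 :=
      norm_mul_lt_one ha (by simpa using pow_le_one₀ (n := j) (norm_nonneg q) hq.le)
    rw [← sub_eq_add_neg]
    exact sub_ne_zero.mpr (ne_one_of_norm_lt_one hlt).symm
  simpa only [qPochhammerInf, sub_eq_add_neg] using
    tprod_one_add_ne_zero_of_summable hfactor (summable_norm_neg_mul_pow hq a)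

lemma hasProd_one_sub_div (hq : ‖q‖ < 1) (a : ℂ) {b : ℂ} (hb : ‖b‖ < 1) :
    HasProd (fun j : ℕ => (1 - a * q ^ j) / (1 - b * q ^ j))
      (qPochhammerInf a q / qPochhammerInf b q) :=
  (multipliable_qPochhammerInf hq a).hasProd.div₀ (multipliable_qPochhammerInf hq b).hasProd
    (qPochhammerInf_ne_zero hq hb)

lemma hasProd_one_sub_div_succ (hq : ‖q‖ < 1) (a : ℂ) {b : ℂ} (hb : ‖b‖ < 1) :
    HasProd (fun j : ℕ => (1 - a * q ^ (j + 1)) / (1 - b * q ^ (j + 1)))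
      (qPochhammerInf (a * q) q / qPochhammerInf (b * q) q) := by
  simpa only [pow_succ', mul_assoc] using
    hasProd_one_sub_div hq (a * q) (norm_mul_lt_one hb hq.le)

end QPochhammer

section Weight

/-- The modified Jacobi theta function `θ(z; q) = (z; q)_∞ (q / z; q)_∞`. -/
def modifiedTheta (q z : ℂ) : ℂ := qPochhammerInf z q * qPochhammerInf (q / z) q

/-- The two-parameter truncated theta weight `θ(z; q) / ((a z; q)_∞ (b q / z; q)_∞)`. Macdonald's
weight `μ(X; q, t)` of type `A₁` is the diagonal case `a = b = t`, `z = X²`; raising `a` and `b`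
separately splits the shift `t ↦ t q` into two half-steps. -/
def macdonaldWeight (q a b z : ℂ) : ℂ :=
  modifiedTheta q z / (qPochhammerInf (a * z) q * qPochhammerInf (b * q / z) q)

variable {q : ℂ}

lemma modifiedTheta_inv (hq : ‖q‖ < 1) {z : ℂ} (hz : z ≠ 0) :
    modifiedTheta q z⁻¹ = -z⁻¹ * modifiedTheta q z := by
  simp only [modifiedTheta, div_inv_eq_mul]
  rw [qPochhammerInf_eq_one_sub_mul hq z⁻¹, qPochhammerInf_eq_one_sub_mul hq z]
  field_simp
  ring

lemma modifiedTheta_div (hq0 : q ≠ 0) (hq : ‖q‖ < 1) {z : ℂ} (hz : z ≠ 0) :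
    modifiedTheta q (z / q) = -(z / q) * modifiedTheta q z := by
  simp only [modifiedTheta, div_div_eq_mul_div]
  rw [qPochhammerInf_eq_one_sub_mul hq (z / q), qPochhammerInf_eq_one_sub_mul hq (q / z),
    div_mul_cancel₀ z hq0, div_mul_eq_mul_div q z q]
  field_simp
  ring

lemma macdonaldWeight_mul_left (hq : ‖q‖ < 1) {a z : ℂ} (b : ℂ) (haz : a * z ≠ 1) :
    macdonaldWeight q (a * q) b z = (1 - a * z) * macdonaldWeight q a b z := by
  have h1 : 1 - a * z ≠ 0 := sub_ne_zero.mpr haz.symm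
  rw [macdonaldWeight, macdonaldWeight, qPochhammerInf_eq_one_sub_mul hq (a * z),
    mul_right_comm a q z, mul_div_assoc', mul_assoc (1 - a * z), mul_div_mul_left _ _ h1]

lemma macdonaldWeight_mul_right (hq : ‖q‖ < 1) (a : ℂ) {b z : ℂ} (hbz : b * q / z ≠ 1) :
    macdonaldWeight q a (b * q) z = (1 - b * q / z) * macdonaldWeight q a b z := by
  have h1 : 1 - b * q / z ≠ 0 := sub_ne_zero.mpr hbz.symm
  rw [macdonaldWeight, macdonaldWeight, qPochhammerInf_eq_one_sub_mul hq (b * q / z),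
    mul_div_right_comm (b * q) q z, mul_div_assoc', mul_left_comm _ (1 - b * q / z),
    mul_div_mul_left _ _ h1]

lemma macdonaldWeight_inv (hq : ‖q‖ < 1) (a b : ℂ) {z : ℂ} (hz : z ≠ 0) :
    macdonaldWeight q (a * q) b z⁻¹ = -z⁻¹ * macdonaldWeight q (b * q) a z := by
  simp only [macdonaldWeight, modifiedTheta_inv hq hz, div_inv_eq_mul, ← div_eq_mul_inv]
  rw [mul_comm (qPochhammerInf _ _), mul_div_assoc]

lemma macdonaldWeight_div (hq0 : q ≠ 0) (hq : ‖q‖ < 1) (a b : ℂ) {z : ℂ} (hz : z ≠ 0) :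
    macdonaldWeight q (a * q) b (z / q) = -(z / q) * macdonaldWeight q a (b * q) z := by
  have ha : a * q * (z / q) = a * z := by field_simp
  have hb : b * q / (z / q) = b * q * q / z := by field_simp
  rw [macdonaldWeight, macdonaldWeight, modifiedTheta_div hq0 hq hz, ha, hb, mul_div_assoc]

lemma differentiableAt_macdonaldWeight (hq : ‖q‖ < 1) {a b z : ℂ} (hz : z ≠ 0)
    (ha : ‖a * z‖ < 1) (hb : ‖b * q / z‖ < 1) :
    DifferentiableAt ℂ (macdonaldWeight q a b) z := by
  have hP := differentiable_qPochhammerInf hq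
  have hdiv (c : ℂ) : DifferentiableAt ℂ (fun w => qPochhammerInf (c / w) q) z :=
    (hP _).comp z (DifferentiableAt.fun_div (by fun_prop) differentiableAt_id hz)
  have hden : DifferentiableAt ℂ (fun w => qPochhammerInf (a * w) q) z :=
    (hP _).comp z (by fun_prop)
  exact ((hP z).mul (hdiv q)).fun_div (hden.mul (hdiv (b * q)))
    (mul_ne_zero (qPochhammerInf_ne_zero hq ha) (qPochhammerInf_ne_zero hq hb))

lemma continuousOn_macdonaldWeight (hq : ‖q‖ < 1) {a b : ℂ} (ha : ‖a‖ < 1) (hb : ‖b * q‖ < 1) :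
    ContinuousOn (macdonaldWeight q a b) (Metric.sphere 0 1) := fun z hz =>
  (differentiableAt_macdonaldWeight hq (ne_zero_of_mem_unit_sphere ⟨z, hz⟩)
    (by rwa [norm_mul, mem_sphere_zero_iff_norm.mp hz, mul_one])
    (by rwa [norm_div, mem_sphere_zero_iff_norm.mp hz, div_one])).continuousAt.continuousWithinAt

end Weight

section CircleAverage

open Real

variable {E : Type*} [NormedAddCommGroup E]

lemma circleAverage_comp_const_mul [NormedSpace ℝ E] (f : ℂ → E) (c : ℂ) (R : ℝ) :
    circleAverage (fun z => f (c * z)) 0 R = circleAverage f 0 (‖c‖ * R) := by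
  have hmap (φ : ℝ) : circleMap 0 (‖c‖ * R) (φ + c.arg) = c * circleMap 0 R φ := by
    conv_rhs => rw [← Complex.norm_mul_exp_arg_mul_I c]
    simp only [circleMap, zero_add, Complex.ofReal_mul, Complex.ofReal_add, add_mul,
      Complex.exp_add]
    ring
  simp only [circleAverage_eq_integral_add (f := f) c.arg, circleAverage_def, hmap]

lemma circleAverage_eq_of_differentiableAt_annulus [NormedSpace ℂ E] {f : ℂ → E} {c : ℂ}
    {r R : ℝ} (hr : 0 < r) (hrR : r ≤ R)
    (hf : ∀ z, r ≤ ‖z - c‖ → ‖z - c‖ ≤ R → DifferentiableAt ℂ f z) :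
    circleAverage f c R = circleAverage f c r := by
  rw [circleAverage_eq_circleIntegral (hr.trans_le hrR).ne', circleAverage_eq_circleIntegral hr.ne']
  congr 1
  refine Complex.circleIntegral_sub_center_inv_smul_eq_of_differentiable_on_annulus_off_countable
    hr hrR Set.countable_empty (fun z hz => ?_) fun z hz => ?_
  · simp only [Set.mem_sdiff, mem_closedBall_iff_norm, mem_ball_iff_norm, not_lt] at hz
    exact (hf z hz.2 hz.1).continuousAt.continuousWithinAt
  · simp only [Set.sdiff_empty, Set.mem_sdiff, mem_closedBall_iff_norm, mem_ball_iff_norm,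
      not_le] at hz
    exact hf z hz.2.le hz.1.le

lemma circleAverage_eq_zero_of_inv_eq_neg [NormedSpace ℝ E] {f : ℂ → E}
    (hf : ∀ z, ‖z‖ = 1 → f z⁻¹ = -f z) : circleAverage f 0 1 = 0 := by
  have : IsAddTorsionFree E := .of_isTorsionFree ℝ E
  have hneg : circleAverage f 0 1 = -circleAverage f 0 1 := by
    calc circleAverage f 0 1 = circleAverage (fun z => f z⁻¹) 0 1 :=
          circleAverage_zero_one_congr_inv.symm
      _ = circleAverage (fun z => (-1 : ℝ) • f z) 0 1 := by
          refine circleAverage_congr_sphere fun z hz => ?_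
          simpa using hf z (by simpa using hz)
      _ = -circleAverage f 0 1 := by rw [circleAverage_fun_smul, neg_one_smul]
  exact self_eq_neg.mp hneg

lemma circleAverage_zero_one_zpow (n : ℤ) :
    circleAverage (fun z => z ^ n) 0 1 = if n = 0 then (1 : ℂ) else 0 := by
  split_ifs with hn
  · simp [hn, circleAverage_const]
  · have hmonomial : Set.EqOn (fun z : ℂ => (z - 0)⁻¹ • z ^ n) (fun z => (z - 0) ^ (n - 1))
        (Metric.sphere 0 1) := fun z hz => by
      have hz0 : z ≠ 0 := ne_zero_of_mem_unit_sphere ⟨z, hz⟩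
      simp [zpow_sub_one₀ hz0, mul_comm]
    rw [circleAverage_eq_circleIntegral one_ne_zero,
      circleIntegral.integral_congr zero_le_one hmonomial,
      circleIntegral.integral_sub_zpow_of_ne (by lia), smul_zero]

lemma hasSum_circleAverage [NormedSpace ℝ E] [CompleteSpace E] {ι : Type*} [Countable ι]
    {f : ι → ℂ → E} {u : ι → ℝ} {c : ℂ} {R : ℝ} (hu : Summable u)
    (hf : ∀ i, ContinuousOn (f i) (Metric.sphere c |R|))
    (hfu : ∀ i, ∀ z ∈ Metric.sphere c |R|, ‖f i z‖ ≤ u i) :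
    HasSum (fun i => circleAverage (f i) c R) (circleAverage (fun z => ∑' i, f i z) c R) := by
  have hmem := circleMap_mem_sphere' c R
  have hcont (i : ι) : Continuous fun φ => f i (circleMap c R φ) :=
    (hf i).comp_continuous (continuous_circleMap c R) hmem
  refine HasSum.const_smul _ (intervalIntegral.hasSum_integral_of_dominated_convergence
    (fun i _ => u i) (fun i => (hcont i).aestronglyMeasurable)
    (fun i => .of_forall fun φ _ => hfu i _ (hmem φ)) (.of_forall fun _ _ => hu)
    intervalIntegrable_const (.of_forall fun φ _ => ?_))
  exact (Summable.of_norm_bounded hu fun i => hfu i _ (hmem φ)).hasSum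

lemma continuousOn_circleAverage [NormedSpace ℝ E] {X : Type*} [TopologicalSpace X]
    {f : X → ℂ → E} {s : Set X} {c : ℂ} {R : ℝ}
    (hf : ContinuousOn (fun x : X × ℂ => f x.1 x.2) (s ×ˢ Metric.sphere c |R|)) :
    ContinuousOn (fun x => circleAverage (f x) c R) s := by
  rw [continuousOn_iff_continuous_domRestrict]
  refine (intervalIntegral.continuous_parametric_intervalIntegral_of_continuous'
    (f := fun (x : s) φ => f x (circleMap c R φ)) ?_ 0 (2 * π)).const_smul _
  exact hf.comp_continuous (f := fun x : s × ℝ => ((x.1 : X), circleMap c R x.2)) (by fun_prop)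
    fun x => ⟨x.1.2, circleMap_mem_sphere' c R x.2⟩

end CircleAverage

section Theta

open Real

/-- Jacobi's theta function `∑_{j ∈ ℤ} p^{j²} Λ^j`, with nome `p` and multiplicative argument `Λ`.
The theta function of the `q`-Mehta–Macdonald identity has nome `p = q^{1/4}`. -/
def nomeTheta (p Λ : ℂ) : ℂ := ∑' j : ℤ, p ^ j ^ 2 * Λ ^ j

variable {p : ℂ}

lemma im_log_div_pi_mul_I_pos (hp0 : p ≠ 0) (hp1 : ‖p‖ < 1) :
    0 < (Complex.log p / (π * Complex.I)).im := by
  have him : (Complex.log p / (π * Complex.I)).im = -Real.log ‖p‖ / π := by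
    rw [div_mul_eq_div_div, Complex.div_I, Complex.neg_im, Complex.mul_I_im,
      Complex.div_ofReal_re, Complex.log_re, neg_div]
  rw [him]
  exact div_pos (neg_pos.mpr (Real.log_neg (norm_pos_iff.mpr hp0) hp1)) pi_pos

lemma jacobiTheta₂_term_log_div (hp0 : p ≠ 0) (j : ℤ) (z : ℂ) :
    jacobiTheta₂_term j z (Complex.log p / (π * Complex.I)) =
      p ^ j ^ 2 * Complex.exp (2 * π * Complex.I * z) ^ j := by
  have hπ : (π : ℂ) ≠ 0 := Complex.ofReal_ne_zero.mpr pi_ne_zero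
  conv_rhs => rw [← Complex.exp_log hp0]
  rw [jacobiTheta₂_term, ← Complex.exp_int_mul, ← Complex.exp_int_mul, ← Complex.exp_add]
  congr 1
  push_cast
  field_simp
  ring

lemma nomeTheta_exp (hp0 : p ≠ 0) (z : ℂ) :
    nomeTheta p (Complex.exp (2 * π * Complex.I * z)) =
      jacobiTheta₂ z (Complex.log p / (π * Complex.I)) :=
  tsum_congr fun j => (jacobiTheta₂_term_log_div hp0 j z).symm

lemma summable_norm_zpow_sq (hp0 : p ≠ 0) (hp1 : ‖p‖ < 1) : Summable fun j : ℤ => ‖p ^ j ^ 2‖ := by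
  have hterm := (summable_jacobiTheta₂_term_iff 0 _).mpr (im_log_div_pi_mul_I_pos hp0 hp1)
  simpa [jacobiTheta₂_term_log_div hp0] using hterm.norm

lemma differentiableAt_nomeTheta (hp0 : p ≠ 0) (hp1 : ‖p‖ < 1) {Λ : ℂ} (hΛ : Λ ≠ 0) :
    DifferentiableAt ℂ (nomeTheta p) Λ := by
  -- `log (x / Λ) + log Λ` is a logarithm of `x` that is holomorphic near `Λ`.
  set w : ℂ → ℂ := fun x => (Complex.log (x / Λ) + Complex.log Λ) / (2 * π * Complex.I)
  have hw : DifferentiableAt ℂ w Λ := by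
    have hlog : DifferentiableAt ℂ (fun x => Complex.log (x / Λ)) Λ :=
      (differentiableAt_id.div_const Λ).clog (by simp [div_self hΛ])
    exact (hlog.add_const _).div_const _
  have hexp : ∀ᶠ x in nhds Λ, nomeTheta p x =
      jacobiTheta₂ (w x) (Complex.log p / (π * Complex.I)) := by
    filter_upwards [eventually_ne_nhds hΛ] with x hx
    rw [← nomeTheta_exp hp0, mul_div_cancel₀ _ Complex.two_pi_I_ne_zero, Complex.exp_add,
      Complex.exp_log (div_ne_zero hx hΛ), Complex.exp_log hΛ, div_mul_cancel₀ x hΛ]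
  exact ((differentiableAt_jacobiTheta₂_fst _ (im_log_div_pi_mul_I_pos hp0 hp1)).comp Λ
    hw).congr_of_eventuallyEq hexp

lemma nomeTheta_inv (p Λ : ℂ) : nomeTheta p Λ⁻¹ = nomeTheta p Λ := by
  rw [nomeTheta, ← (Equiv.neg ℤ).tsum_eq]
  simp [nomeTheta]

lemma nomeTheta_sq_mul (hp0 : p ≠ 0) {Λ : ℂ} (hΛ : Λ ≠ 0) :
    nomeTheta p (p ^ 2 * Λ) = (p * Λ)⁻¹ * nomeTheta p Λ := by
  rw [nomeTheta, nomeTheta, ← tsum_mul_left, ← (Equiv.addRight (1 : ℤ)).tsum_eq fun j =>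
    (p * Λ)⁻¹ * (p ^ j ^ 2 * Λ ^ j)]
  refine tsum_congr fun j => ?_
  have hsq : p ^ (j + 1) ^ 2 = p ^ j ^ 2 * (p ^ 2) ^ j * p := by
    rw [← zpow_natCast p 2, ← zpow_mul, ← zpow_add₀ hp0, ← zpow_add_one₀ hp0]
    congr 1
    push_cast
    ring
  rw [Equiv.coe_addRight, hsq, zpow_add_one₀ hΛ, mul_zpow]
  field_simp

end Theta

section ThetaMean

open Real

/-- The constant term of `X ↦ f (X²)` against the theta function of nome `p`, that is
`(1/2π) ∫ θ(e^{iφ}) f(e^{2iφ}) dφ`; functions of type `A₁` depend on `X` through `X²` only. -/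
def thetaMean (p : ℂ) (f : ℂ → ℂ) : ℂ :=
  circleAverage (fun X => nomeTheta p X * f (X ^ 2)) 0 1

variable {p : ℂ} {f g : ℂ → ℂ}

lemma sq_mem_unit_sphere {X : ℂ} (hX : X ∈ Metric.sphere (0 : ℂ) 1) :
    X ^ 2 ∈ Metric.sphere (0 : ℂ) 1 := by
  rw [mem_sphere_zero_iff_norm] at hX ⊢
  rw [norm_pow, hX, one_pow]

lemma thetaMean_congr (hfg : Set.EqOn f g (Metric.sphere 0 1)) : thetaMean p f = thetaMean p g := by
  refine circleAverage_congr_sphere fun X hX => ?_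
  rw [abs_one] at hX
  exact congrArg (nomeTheta p X * ·) (hfg (sq_mem_unit_sphere hX))

lemma thetaMean_inv (p : ℂ) (f : ℂ → ℂ) : thetaMean p (fun z => f z⁻¹) = thetaMean p f := by
  have hinv := circleAverage_zero_one_congr_inv (f := fun X => nomeTheta p X * f (X ^ 2))
  simpa only [thetaMean, nomeTheta_inv, inv_pow] using hinv

lemma thetaMean_const_mul (p c : ℂ) (f : ℂ → ℂ) :
    thetaMean p (fun z => c * f z) = c * thetaMean p f := by
  simpa only [thetaMean, mul_left_comm _ c, smul_eq_mul] using
    circleAverage_fun_smul (a := c) (f := fun X => nomeTheta p X * f (X ^ 2)) (c := 0) (R := 1)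

lemma continuousOn_nomeTheta (hp0 : p ≠ 0) (hp1 : ‖p‖ < 1) :
    ContinuousOn (nomeTheta p) (Metric.sphere 0 1) := fun X hX =>
  (differentiableAt_nomeTheta hp0 hp1
    (ne_zero_of_mem_unit_sphere ⟨X, hX⟩)).continuousAt.continuousWithinAt

lemma circleIntegrable_nomeTheta_mul (hp0 : p ≠ 0) (hp1 : ‖p‖ < 1)
    (hf : ContinuousOn f (Metric.sphere 0 1)) :
    CircleIntegrable (fun X => nomeTheta p X * f (X ^ 2)) 0 1 :=
  ((continuousOn_nomeTheta hp0 hp1).mul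
    (hf.comp (by fun_prop) fun _ => sq_mem_unit_sphere)).circleIntegrable zero_le_one

lemma thetaMean_add (hp0 : p ≠ 0) (hp1 : ‖p‖ < 1) (hf : ContinuousOn f (Metric.sphere 0 1))
    (hg : ContinuousOn g (Metric.sphere 0 1)) :
    thetaMean p (fun z => f z + g z) = thetaMean p f + thetaMean p g := by
  simpa only [thetaMean, mul_add] using circleAverage_fun_add
    (circleIntegrable_nomeTheta_mul hp0 hp1 hf) (circleIntegrable_nomeTheta_mul hp0 hp1 hg)

lemma thetaMean_zpow (hp0 : p ≠ 0) (hp1 : ‖p‖ < 1) (n : ℤ) :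
    thetaMean p (fun z => z ^ n) = (p ^ 4) ^ n ^ 2 := by
  have hmonomial (j : ℤ) : circleAverage (fun X => p ^ j ^ 2 * X ^ (j + 2 * n)) 0 1 =
      if j = -2 * n then (p ^ 4) ^ n ^ 2 else 0 := by
    simp only [← smul_eq_mul (p ^ j ^ 2), circleAverage_fun_smul, circleAverage_zero_one_zpow]
    by_cases hj : j = -2 * n
    · rw [if_pos (by lia), if_pos hj, smul_eq_mul, mul_one, hj, ← zpow_natCast p 4, ← zpow_mul]
      congr 1
      ring
    · rw [if_neg (by lia), if_neg hj, smul_zero]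
  have hsphere {X : ℂ} (hX : X ∈ Metric.sphere (0 : ℂ) |1|) : X ≠ 0 :=
    ne_zero_of_mem_unit_sphere ⟨X, by rwa [abs_one] at hX⟩
  have hsum := hasSum_circleAverage (c := 0) (R := 1) (summable_norm_zpow_sq hp0 hp1)
    (f := fun j X => p ^ j ^ 2 * X ^ (j + 2 * n))
    (fun j => continuousOn_const.mul fun X hX =>
      (continuousAt_zpow₀ X _ (.inl (hsphere hX))).continuousWithinAt)
    (fun j X hX => by simp [norm_zpow, (show ‖X‖ = 1 by simpa using hX)])
  calc thetaMean p (fun z => z ^ n)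
      = circleAverage (fun X => ∑' j : ℤ, p ^ j ^ 2 * X ^ (j + 2 * n)) 0 1 := by
        refine circleAverage_congr_sphere fun X hX => ?_
        simp only [nomeTheta, ← tsum_mul_right, mul_assoc, ← zpow_natCast X 2, ← zpow_mul,
          ← zpow_add₀ (hsphere hX), Nat.cast_ofNat]
    _ = (p ^ 4) ^ n ^ 2 := by
        rw [← hsum.tsum_eq, tsum_congr hmonomial, tsum_ite_eq]

end ThetaMean

section ShiftRelation

open Real

variable {p t : ℂ}

lemma norm_pow_four_lt_one (hp1 : ‖p‖ < 1) : ‖p ^ 4‖ < 1 := by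
  rw [norm_pow]
  exact pow_lt_one₀ (norm_nonneg p) hp1 four_ne_zero

lemma div_ne_one_of_mem_unit_sphere {a z : ℂ} (ha : ‖a‖ < 1) (hz : z ∈ Metric.sphere (0 : ℂ) 1) :
    a / z ≠ 1 :=
  ne_one_of_norm_lt_one (by rwa [norm_div, mem_sphere_zero_iff_norm.mp hz, div_one])

lemma thetaMean_macdonaldWeight_mul_right (hp0 : p ≠ 0) (hp1 : ‖p‖ < 1) (ht : ‖t * p ^ 4‖ < 1) :
    thetaMean p (macdonaldWeight (p ^ 4) (t * p ^ 4) (t * p ^ 4)) =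
      (1 + t * p ^ 4) * thetaMean p (macdonaldWeight (p ^ 4) (t * p ^ 4) t) := by
  have hq := norm_pow_four_lt_one hp1
  set W := macdonaldWeight (p ^ 4) (t * p ^ 4) t with hW
  have hcont : ContinuousOn W (Metric.sphere 0 1) := continuousOn_macdonaldWeight hq ht ht
  have hcont_inv : ContinuousOn (fun z => W z⁻¹) (Metric.sphere 0 1) :=
    hcont.comp (continuousOn_inv₀.mono fun z hz => ne_zero_of_mem_unit_sphere ⟨z, hz⟩)
      fun z hz => by simpa using hz
  have hsplit : Set.EqOn (macdonaldWeight (p ^ 4) (t * p ^ 4) (t * p ^ 4))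
      (fun z => W z + t * p ^ 4 * W z⁻¹) (Metric.sphere 0 1) := by
    intro z hz
    have hz0 : z ≠ 0 := ne_zero_of_mem_unit_sphere ⟨z, hz⟩
    have hne : t * p ^ 4 / z ≠ 1 := div_ne_one_of_mem_unit_sphere ht hz
    simp only [macdonaldWeight_mul_right hq _ hne, hW, macdonaldWeight_inv hq t t hz0]
    ring
  rw [thetaMean_congr hsplit, thetaMean_add hp0 hp1 hcont (hcont_inv.const_mul _),
    thetaMean_const_mul, thetaMean_inv]
  ring

lemma thetaMean_comp_div (hp0 : p ≠ 0) (hp1 : ‖p‖ < 1) {f : ℂ → ℂ}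
    (hf : ∀ z, 1 ≤ ‖z‖ → ‖p ^ 4 * z‖ ≤ 1 → DifferentiableAt ℂ f z) :
    thetaMean p (fun z => f (z / p ^ 4)) =
      circleAverage (fun Y => (p * Y)⁻¹ * nomeTheta p Y * f (Y ^ 2)) 0 1 := by
  have hp2 : p ^ 2 ≠ 0 := pow_ne_zero 2 hp0
  have hradius : 1 ≤ ‖(p ^ 2)⁻¹‖ := by
    rw [norm_inv, norm_pow]
    exact (one_le_inv₀ (pow_pos (norm_pos_iff.mpr hp0) 2)).mpr (pow_le_one₀ (norm_nonneg p) hp1.le)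
  set F : ℂ → ℂ := fun Y => (p * Y)⁻¹ * nomeTheta p Y * f (Y ^ 2) with hF
  have hrescale : Set.EqOn (fun X => nomeTheta p X * f (X ^ 2 / p ^ 4))
      (fun X => F ((p ^ 2)⁻¹ * X)) (Metric.sphere 0 |1|) := by
    intro X hX
    have hX0 : X ≠ 0 := ne_zero_of_mem_unit_sphere ⟨X, by rwa [abs_one] at hX⟩
    have hsq : ((p ^ 2)⁻¹ * X) ^ 2 = X ^ 2 / p ^ 4 := by field_simp
    have hθ := nomeTheta_sq_mul hp0 (mul_ne_zero (inv_ne_zero hp2) hX0)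
    rw [mul_inv_cancel_left₀ hp2] at hθ
    simp only [hF, hsq, hθ]
  have hdiff : ∀ Y, 1 ≤ ‖Y - 0‖ → ‖Y - 0‖ ≤ ‖(p ^ 2)⁻¹‖ → DifferentiableAt ℂ F Y := by
    intro Y hY1 hY2
    rw [sub_zero] at hY1 hY2
    have hY0 : Y ≠ 0 := norm_pos_iff.mp (zero_lt_one.trans_le hY1)
    have hpY : ‖p ^ 2 * Y‖ ≤ 1 := by
      rwa [norm_inv, ← one_div, le_div_iff₀' (norm_pos_iff.mpr hp2), ← norm_mul] at hY2
    have hfY : DifferentiableAt ℂ f (Y ^ 2) := hf _ (by rw [norm_pow]; exact one_le_pow₀ hY1) <| by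
      rw [show p ^ 4 * Y ^ 2 = (p ^ 2 * Y) ^ 2 by ring, norm_pow]
      exact pow_le_one₀ (norm_nonneg _) hpY
    have hinv : DifferentiableAt ℂ (fun Y => (p * Y)⁻¹) Y :=
      (differentiableAt_id.const_mul p).inv (mul_ne_zero hp0 hY0)
    exact (hinv.mul (differentiableAt_nomeTheta hp0 hp1 hY0)).mul
      (hfY.comp Y (differentiableAt_pow 2))
  rw [thetaMean, circleAverage_congr_sphere hrescale, circleAverage_comp_const_mul, mul_one,
    circleAverage_eq_of_differentiableAt_annulus zero_lt_one hradius hdiff]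

lemma thetaMean_macdonaldWeight_div (hp0 : p ≠ 0) (hp1 : ‖p‖ < 1) (ht : ‖t‖ < 1) :
    thetaMean p (fun z => macdonaldWeight (p ^ 4) (t * p ^ 4) t (z / p ^ 4)) = 0 := by
  have hq := norm_pow_four_lt_one hp1
  rw [thetaMean_comp_div hp0 hp1]
  · refine circleAverage_eq_zero_of_inv_eq_neg fun Y hY => ?_
    have hY0 : Y ≠ 0 := norm_ne_zero_iff.mp (hY ▸ one_ne_zero)
    simp only [nomeTheta_inv, inv_pow, macdonaldWeight_inv hq t t (pow_ne_zero 2 hY0)]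
    field_simp
  · intro z hz1 hz2
    have ha : ‖t * p ^ 4 * z‖ < 1 := by
      rw [mul_assoc]
      exact norm_mul_lt_one ht hz2
    have hb : ‖t * p ^ 4 / z‖ < 1 := by
      rw [norm_div]
      exact (div_le_self (norm_nonneg _) hz1).trans_lt (norm_mul_lt_one ht hq.le)
    exact differentiableAt_macdonaldWeight hq (norm_pos_iff.mp (zero_lt_one.trans_le hz1)) ha hb

lemma thetaMean_macdonaldWeight_mul_left (hp0 : p ≠ 0) (hp1 : ‖p‖ < 1) (ht : ‖t‖ < 1) :
    thetaMean p (macdonaldWeight (p ^ 4) (t * p ^ 4) t) =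
      (1 - t ^ 2 * p ^ 4) * thetaMean p (macdonaldWeight (p ^ 4) t t) := by
  have hq0 := pow_ne_zero 4 hp0
  have hq := norm_pow_four_lt_one hp1
  have htq := norm_mul_lt_one ht hq.le
  set W := macdonaldWeight (p ^ 4) t t with hW
  have hcont : ContinuousOn W (Metric.sphere 0 1) := continuousOn_macdonaldWeight hq ht htq
  have hdiv : Set.EqOn (fun z => macdonaldWeight (p ^ 4) (t * p ^ 4) t (z / p ^ 4))
      (fun z => (t - z / p ^ 4) * W z) (Metric.sphere 0 1) := by
    intro z hz
    have hz0 : z ≠ 0 := ne_zero_of_mem_unit_sphere ⟨z, hz⟩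
    have hne : t * p ^ 4 / z ≠ 1 := div_ne_one_of_mem_unit_sphere htq hz
    simp only [macdonaldWeight_div hq0 hq t t hz0, macdonaldWeight_mul_right hq t hne, hW]
    field_simp
    ring
  have hsplit : Set.EqOn (macdonaldWeight (p ^ 4) (t * p ^ 4) t)
      (fun z => (1 - t ^ 2 * p ^ 4) * W z + t * p ^ 4 * ((t - z / p ^ 4) * W z))
      (Metric.sphere 0 1) := by
    intro z hz
    have hne : t * z ≠ 1 :=
      ne_one_of_norm_lt_one (norm_mul_lt_one ht (mem_sphere_zero_iff_norm.mp hz).le)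
    simp only [macdonaldWeight_mul_left hq t hne, hW]
    field_simp
    ring
  have hdiv_cont : ContinuousOn (fun z => (t - z / p ^ 4) * W z) (Metric.sphere 0 1) :=
    .mul (by fun_prop) hcont
  rw [thetaMean_congr hsplit, thetaMean_add hp0 hp1 (hcont.const_mul _) (hdiv_cont.const_mul _),
    thetaMean_const_mul, thetaMean_const_mul, ← thetaMean_congr hdiv,
    thetaMean_macdonaldWeight_div hp0 hp1 ht]
  ring

lemma thetaMean_macdonaldWeight_shift (hp0 : p ≠ 0) (hp1 : ‖p‖ < 1) (ht : ‖t‖ < 1) :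
    thetaMean p (macdonaldWeight (p ^ 4) (t * p ^ 4) (t * p ^ 4)) =
      (1 + t * p ^ 4) * (1 - t ^ 2 * p ^ 4) * thetaMean p (macdonaldWeight (p ^ 4) t t) := by
  have htq := norm_mul_lt_one ht (norm_pow_four_lt_one hp1).le
  rw [thetaMean_macdonaldWeight_mul_right hp0 hp1 htq,
    thetaMean_macdonaldWeight_mul_left hp0 hp1 ht, mul_assoc]

end ShiftRelation

section Evaluation

open Real

variable {p : ℂ}

lemma macdonaldWeight_self_one {q z : ℂ} (hq : ‖q‖ < 1) (hz : ‖z‖ = 1) :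
    macdonaldWeight q q 1 z = 1 - z := by
  have hleft : qPochhammerInf (q * z) q ≠ 0 := qPochhammerInf_ne_zero hq (by simpa [hz] using hq)
  have hright : qPochhammerInf (q / z) q ≠ 0 := qPochhammerInf_ne_zero hq (by simpa [hz] using hq)
  rw [macdonaldWeight, modifiedTheta, one_mul, mul_div_mul_right _ _ hright,
    qPochhammerInf_eq_one_sub_mul hq z, mul_comm z q, mul_div_cancel_right₀ _ hleft]

lemma thetaMean_macdonaldWeight_self (hp0 : p ≠ 0) (hp1 : ‖p‖ < 1) :
    thetaMean p (macdonaldWeight (p ^ 4) (p ^ 4) (p ^ 4)) = (1 + p ^ 4) * (1 - p ^ 4) := by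
  have hq := norm_pow_four_lt_one hp1
  have hweight : Set.EqOn (macdonaldWeight (p ^ 4) (p ^ 4) 1)
      (fun z => z ^ (0 : ℤ) + (-1) * z ^ (1 : ℤ)) (Metric.sphere 0 1) := by
    intro z hz
    rw [macdonaldWeight_self_one hq (mem_sphere_zero_iff_norm.mp hz)]
    simp [sub_eq_add_neg]
  have hhalf := thetaMean_macdonaldWeight_mul_right (t := 1) hp0 hp1 (by rwa [one_mul])
  simp only [one_mul] at hhalf
  rw [hhalf, thetaMean_congr hweight, thetaMean_add hp0 hp1 (by simp [continuousOn_const])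
    (by simpa using continuous_neg.continuousOn), thetaMean_const_mul, thetaMean_zpow hp0 hp1,
    thetaMean_zpow hp0 hp1]
  simp [sub_eq_add_neg]

lemma continuousOn_thetaMean_macdonaldWeight (hp0 : p ≠ 0) (hp1 : ‖p‖ < 1) :
    ContinuousOn (fun t => thetaMean p (macdonaldWeight (p ^ 4) t t)) (Metric.ball 0 1) := by
  have hq := norm_pow_four_lt_one hp1
  have hP := continuous_qPochhammerInf hq
  refine continuousOn_circleAverage ?_
  rw [abs_one]
  have hne : ∀ x ∈ Metric.ball (0 : ℂ) 1 ×ˢ Metric.sphere (0 : ℂ) 1, x.2 ^ 2 ≠ 0 :=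
    fun x hx => pow_ne_zero 2 (ne_zero_of_mem_unit_sphere ⟨x.2, hx.2⟩)
  have hθ : ContinuousOn (fun x : ℂ × ℂ => nomeTheta p x.2)
      (Metric.ball 0 1 ×ˢ Metric.sphere 0 1) :=
    (continuousOn_nomeTheta hp0 hp1).comp continuousOn_snd fun x hx => hx.2
  have hdiv {c : ℂ × ℂ → ℂ} (hc : Continuous c) :
      ContinuousOn (fun x : ℂ × ℂ => qPochhammerInf (c x / x.2 ^ 2) (p ^ 4))
        (Metric.ball 0 1 ×ˢ Metric.sphere 0 1) :=
    hP.comp_continuousOn (hc.continuousOn.div (by fun_prop) hne)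
  refine hθ.mul (.div (.mul (hP.comp (by fun_prop)).continuousOn (hdiv continuous_const))
    (.mul (hP.comp (by fun_prop)).continuousOn (hdiv (by fun_prop))) fun x hx => ?_)
  have ht : ‖x.1‖ < 1 := mem_ball_zero_iff.mp hx.1
  have hX : ‖x.2‖ = 1 := mem_sphere_zero_iff_norm.mp hx.2
  exact mul_ne_zero (qPochhammerInf_ne_zero hq (by simpa [hX] using ht))
    (qPochhammerInf_ne_zero hq (by simpa [hX] using norm_mul_lt_one ht hq.le))

lemma eq_apply_zero_of_mul_right_invariant {Y : Type*} [TopologicalSpace Y] [T2Space Y] {q : ℂ}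
    (hq : ‖q‖ < 1) {f : ℂ → Y} (hf : ContinuousAt f 0)
    (hinv : ∀ t, ‖t‖ < 1 → f (t * q) = f t) {t : ℂ} (ht : ‖t‖ < 1) : f t = f 0 := by
  have horbit (n : ℕ) : f (t * q ^ n) = f t := by
    induction n with
    | zero => simp
    | succ n ih =>
      have hlt : ‖t * q ^ n‖ < 1 :=
        norm_mul_lt_one ht (by simpa using pow_le_one₀ (n := n) (norm_nonneg q) hq.le)
      rw [pow_succ, ← mul_assoc, hinv _ hlt, ih]
  have hlim : Tendsto (fun n : ℕ => t * q ^ n) atTop (nhds 0) := by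
    simpa using (tendsto_pow_atTop_nhds_zero_of_norm_lt_one hq).const_mul t
  refine tendsto_nhds_unique ?_ (hf.tendsto.comp hlim)
  simp only [Function.comp_def, horbit, tendsto_const_nhds]

/-- The constant term of `θ · μ`, divided by the value `(t q; q)_∞ / (t² q; q)_∞` expected
for it, where `q = p⁴`. -/
def normalizedThetaMean (p t : ℂ) : ℂ :=
  thetaMean p (macdonaldWeight (p ^ 4) t t) *
    (qPochhammerInf (t ^ 2 * p ^ 4) (p ^ 4) / qPochhammerInf (t * p ^ 4) (p ^ 4))

lemma normalizedThetaMean_mul (hp0 : p ≠ 0) (hp1 : ‖p‖ < 1) {t : ℂ} (ht : ‖t‖ < 1) :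
    normalizedThetaMean p (t * p ^ 4) = normalizedThetaMean p t := by
  have hq := norm_pow_four_lt_one hp1
  have htq := norm_mul_lt_one ht hq.le
  have hne : 1 - t * p ^ 4 ≠ 0 := sub_ne_zero.mpr (ne_one_of_norm_lt_one htq).symm
  rw [normalizedThetaMean, normalizedThetaMean, thetaMean_macdonaldWeight_shift hp0 hp1 ht,
    qPochhammerInf_eq_one_sub_mul hq (t * p ^ 4), qPochhammerInf_eq_one_sub_mul hq (t ^ 2 * p ^ 4),
    qPochhammerInf_eq_one_sub_mul hq (t ^ 2 * p ^ 4 * p ^ 4),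
    show (t * p ^ 4) ^ 2 * p ^ 4 = t ^ 2 * p ^ 4 * p ^ 4 * p ^ 4 by ring]
  field_simp
  ring

lemma normalizedThetaMean_pow_four (hp0 : p ≠ 0) (hp1 : ‖p‖ < 1) :
    normalizedThetaMean p (p ^ 4) = 1 := by
  have hq := norm_pow_four_lt_one hp1
  have hqq := norm_mul_lt_one hq hq.le
  have hne : 1 - p ^ 4 * p ^ 4 ≠ 0 := sub_ne_zero.mpr (ne_one_of_norm_lt_one hqq).symm
  have hP := qPochhammerInf_ne_zero hq (norm_mul_lt_one hqq hq.le)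
  rw [normalizedThetaMean, thetaMean_macdonaldWeight_self hp0 hp1, sq (p ^ 4),
    qPochhammerInf_eq_one_sub_mul hq (p ^ 4 * p ^ 4), div_mul_cancel_right₀ hP,
    show (1 + p ^ 4) * (1 - p ^ 4) = 1 - p ^ 4 * p ^ 4 by ring, mul_inv_cancel₀ hne]

lemma continuousAt_normalizedThetaMean (hp0 : p ≠ 0) (hp1 : ‖p‖ < 1) :
    ContinuousAt (normalizedThetaMean p) 0 := by
  have hP := continuous_qPochhammerInf (norm_pow_four_lt_one hp1)
  refine ((continuousOn_thetaMean_macdonaldWeight hp0 hp1).continuousAt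
    (Metric.ball_mem_nhds 0 one_pos)).mul (.div ?_ ?_ ?_)
  · exact (hP.comp (by fun_prop)).continuousAt
  · exact (hP.comp (by fun_prop)).continuousAt
  · simp [qPochhammerInf_zero_left]

theorem qMehtaMacdonald_A1_general {t : ℂ} (hp0 : p ≠ 0) (hp1 : ‖p‖ < 1) (ht : ‖t‖ < 1) :
    thetaMean p (macdonaldWeight (p ^ 4) t t) =
      qPochhammerInf (t * p ^ 4) (p ^ 4) / qPochhammerInf (t ^ 2 * p ^ 4) (p ^ 4) := by
  have hq := norm_pow_four_lt_one hp1
  have hconst {s : ℂ} (hs : ‖s‖ < 1) : normalizedThetaMean p s = normalizedThetaMean p 0 :=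
    eq_apply_zero_of_mul_right_invariant hq (continuousAt_normalizedThetaMean hp0 hp1)
      (fun _ => normalizedThetaMean_mul hp0 hp1) hs
  have hone : normalizedThetaMean p t = 1 := by
    rw [hconst ht, ← hconst hq, normalizedThetaMean_pow_four hp0 hp1]
  have ht2 : ‖t ^ 2‖ < 1 := by simpa using pow_lt_one₀ (norm_nonneg t) ht two_ne_zero
  have hnum := qPochhammerInf_ne_zero hq (norm_mul_lt_one ht hq.le)
  have hden := qPochhammerInf_ne_zero hq (norm_mul_lt_one ht2 hq.le)
  rw [normalizedThetaMean, mul_div_assoc', div_eq_one_iff_eq hnum] at hone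
  rw [eq_div_iff hden, hone]

end Evaluation

section RealNome

open Real

lemma ofReal_rpow_quarter_pow_four {q : ℝ} (hq0 : 0 < q) :
    ((q ^ (1 / 4 : ℝ) : ℝ) : ℂ) ^ 4 = q := by
  rw [← Complex.ofReal_pow, ← Real.rpow_natCast, ← Real.rpow_mul hq0.le]
  norm_num

lemma thetaA1_eq_nomeTheta {q : ℝ} (hq0 : 0 < q) (Λ : ℂ) :
    thetaA1 q Λ = nomeTheta ((q ^ (1 / 4 : ℝ) : ℝ) : ℂ) Λ := by
  refine tsum_congr fun j => ?_
  rw [← Complex.ofReal_zpow, ← Real.rpow_intCast, ← Real.rpow_mul hq0.le]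
  push_cast
  ring_nf

lemma muA1_eq_macdonaldWeight {q : ℝ} (hq : ‖(q : ℂ)‖ < 1) {t X : ℂ} (ht : ‖t‖ < 1)
    (hX : ‖X‖ = 1) : muA1 q t X = macdonaldWeight q t t (X ^ 2) := by
  have hleft : ‖t * X ^ 2‖ < 1 := by simpa [hX] using ht
  have hright : ‖t * q / X ^ 2‖ < 1 := by
    simpa [hX] using norm_mul_lt_one ht hq.le
  have hprod := (hasProd_one_sub_div hq (X ^ 2) hleft).mul
    (hasProd_one_sub_div hq (q / X ^ 2) hright)
  rw [div_mul_div_comm] at hprod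
  rw [macdonaldWeight, modifiedTheta, ← hprod.tprod_eq]
  refine tprod_congr fun j => ?_
  rw [div_mul_div_comm]
  congr 2 <;> ring

lemma integral_thetaA1_mul_muA1 {q : ℝ} (hq0 : 0 < q) (hq1 : q < 1) {t : ℂ} (ht : ‖t‖ < 1) :
    (1 / (2 * (π : ℂ))) * ∫ φ : ℝ in (0 : ℝ)..(2 * π),
        thetaA1 q (Complex.exp (Complex.I * φ)) * muA1 q t (Complex.exp (Complex.I * φ)) =
      thetaMean ((q ^ (1 / 4 : ℝ) : ℝ) : ℂ) (macdonaldWeight q t t) := by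
  have hq : ‖(q : ℂ)‖ < 1 := by rwa [Complex.norm_of_nonneg hq0.le]
  have hcircle (φ : ℝ) : Complex.exp (Complex.I * φ) = circleMap 0 1 φ := by
    simp [circleMap, mul_comm]
  have hmu (φ : ℝ) := muA1_eq_macdonaldWeight (X := circleMap 0 1 φ) hq ht (by simp)
  simp only [thetaMean, circleAverage_def, hcircle, thetaA1_eq_nomeTheta hq0, hmu,
    Complex.real_smul, one_div]
  push_cast
  rfl

end RealNome

/-- the q-Mehta–Macdonald identity of type A₁. -/
theorem qMehtaMacdonald_A1 (q : ℝ) (hq0 : 0 < q) (hq1 : q < 1) (t : ℂ) (ht : ‖t‖ < 1) :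
    (1 / (2 * (Real.pi : ℂ))) *
      ∫ φ : ℝ in (0:ℝ)..(2 * Real.pi),
        thetaA1 q (Complex.exp (Complex.I * (φ : ℂ))) *
          muA1 q t (Complex.exp (Complex.I * (φ : ℂ))) =
    ∏' j : ℕ, (1 - t * (q : ℂ) ^ (j + 1)) / (1 - t ^ 2 * (q : ℂ) ^ (j + 1)) := by
  set p : ℂ := ((q ^ (1 / 4 : ℝ) : ℝ) : ℂ) with hp
  have hpq : p ^ 4 = q := ofReal_rpow_quarter_pow_four hq0
  have hp0 : p ≠ 0 := Complex.ofReal_ne_zero.mpr (Real.rpow_pos_of_pos hq0 _).ne'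
  have hp1 : ‖p‖ < 1 := by
    rw [hp, Complex.norm_of_nonneg (Real.rpow_nonneg hq0.le _)]
    exact Real.rpow_lt_one hq0.le hq1 (by norm_num)
  have hmean := qMehtaMacdonald_A1_general hp0 hp1 ht
  have hproduct := hasProd_one_sub_div_succ (norm_pow_four_lt_one hp1) t (b := t ^ 2)
    (by simpa using pow_lt_one₀ (norm_nonneg t) ht two_ne_zero)
  rw [hpq] at hmean hproduct
  rw [integral_thetaA1_mul_muA1 hq0 hq1 ht, hmean, hproduct.tprod_eq]

end
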